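/- (Fourth formal-group-law formula, Theorem "fglFormulas" of the paper, relation for v̄₄.) Under the stated hypotheses, v₄ ≡ r₃⁴·s₃ modulo (2, v₁, v₂, v₃); that is, v₄ − r₃⁴·s₃ lies in the ideal (2, v₁, v₂, v₃) of S. -/

import Mathlib

/-!
The idea is to specialize along `s₁ ↦ -r₁`, `s₃ ↦ r₁³ - r₃`. Combining each logarithm relation with
its `γ`-conjugate and `γ² mᵢ = -mᵢ` expresses `2 mᵢ` through lower terms. This gives
`v₁ = -(r₁ + s₁)` and `v₂ ≡ -7 (r₃ + s₃ - r₁³)` modulo `r₁ + s₁`, so the endomorphism `spec` of `S`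
induces the identity modulo `(2, v₁, v₂, v₃)` (`sub_spec_mem`).

After specialization, extended to `S[1/2]` as `specAway`, both `m₁` and `m₂` vanish, and with
`f = r₁⁷ - r₁⁴ r₃ - r₁ r₃²` the relations collapse to
`2 m₃ = f`, `v₃ = -127 f` and `v₄ = (1 - 2¹⁵) ((r₁³ - r₃) r₃⁴ - f r₁⁸)`.
Modulo `2` and `v₃` the last expression is `(r₁³ - r₃) r₃⁴`, the specialization of `r₃⁴ s₃`.
-/

noncomputable section

open MvPolynomial

instance : (Ideal.span {(2 : ℤ)}).IsPrime :=
  (Ideal.span_singleton_prime (by norm_num)).mpr Int.prime_two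

/-- `ℤ₍₂₎`, the localization of `ℤ` at the prime ideal `(2)`. -/
abbrev Zloc : Type := Localization.AtPrime (Ideal.span {(2 : ℤ)})

/-- `S = ℤ₍₂₎[r₁, s₁, r₃, s₃]`, the polynomial ring in four variables over `ℤ₍₂₎`. -/
abbrev S : Type := MvPolynomial (Fin 4) Zloc

/-- The generator `r₁`. -/
def r1 : S := X 0
/-- The generator `s₁` (playing the role of `γr̄₁`). -/
def s1 : S := X 1
/-- The generator `r₃`. -/
def r3 : S := X 2
/-- The generator `s₃` (playing the role of `γr̄₃`). -/
def s3 : S := X 3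

/-- `S[1/2]`, the localization of `S` away from `2`. -/
abbrev S2 : Type := Localization.Away (2 : S)

/-- The canonical map `S → S[1/2]`. -/
def ι : S →+* S2 := algebraMap S S2

/-- The specialization `s₁ ↦ -r₁`, `s₃ ↦ r₁³ - r₃` of `S`, fixing `r₁` and `r₃`. -/
def spec : S →ₐ[Zloc] S := aeval ![r1, -r1, r3, r1 ^ 3 - r3]

lemma spec_r1 : spec r1 = r1 := by simp [spec, r1]
lemma spec_s1 : spec s1 = -r1 := by simp [spec, s1]
lemma spec_r3 : spec r3 = r3 := by simp [spec, r3]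
lemma spec_s3 : spec s3 = r1 ^ 3 - r3 := by simp [spec, s3]

/-- `spec` is the identity modulo any ideal containing `r₁ + s₁` and `r₃ + s₃ - r₁³`. -/
lemma sub_spec_mem (I : Ideal S) (h1 : r1 + s1 ∈ I) (h3 : r3 + s3 - r1 ^ 3 ∈ I) (x : S) :
    x - spec x ∈ I := by
  have key : (Ideal.Quotient.mkₐ Zloc I).comp spec = Ideal.Quotient.mkₐ Zloc I := by
    apply MvPolynomial.algHom_ext
    intro i
    simp only [AlgHom.comp_apply, Ideal.Quotient.mkₐ_eq_mk]
    refine Eq.symm (Ideal.Quotient.eq.mpr ?_)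
    fin_cases i
    · change r1 - spec r1 ∈ I
      simp [spec_r1]
    · change s1 - spec s1 ∈ I
      rw [spec_s1]
      convert h1 using 1
      ring
    · change r3 - spec r3 ∈ I
      simp [spec_r3]
    · change s3 - spec s3 ∈ I
      rw [spec_s3]
      convert h3 using 1
      ring
  exact Ideal.Quotient.eq.mp (DFunLike.congr_fun key x).symm

lemma isUnit_two : IsUnit (2 : S2) := by
  have h := IsLocalization.Away.algebraMap_isUnit (S := S2) (2 : S)
  rwa [map_ofNat] at h

lemma ι_injective : Function.Injective ι := by
  have : CharZero Zloc := charZero_of_injective_algebraMap (R := ℤ)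
    (IsLocalization.injective Zloc (Ideal.primeCompl_le_nonZeroDivisors (Ideal.span {(2 : ℤ)})))
  refine IsLocalization.injective S2 (M := Submonoid.powers (2 : S)) ?_
  exact powers_le_nonZeroDivisors_of_noZeroDivisors two_ne_zero

/-- The extension of `spec` to `S[1/2]`. -/
def specAway : S2 →+* S2 :=
  IsLocalization.Away.lift (2 : S) (g := ι.comp (spec : S →+* S))
    (by rw [map_ofNat]; exact isUnit_two)

lemma specAway_ι (x : S) : specAway (ι x) = ι (spec x) :=
  IsLocalization.Away.lift_eq (2 : S) _ x

/-- **Theorem (fglFormulas, fourth relation).**  `v₄ ≡ r₃⁴·s₃ (mod (2, v₁, v₂, v₃))`. -/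
theorem v4_formula
    (γ : S2 ≃+* S2)
    (hγr1 : γ (ι r1) = ι s1) (hγs1 : γ (ι s1) = -ι r1)
    (hγr3 : γ (ι r3) = ι s3) (hγs3 : γ (ι s3) = -ι r3)
    (m1 m2 m3 m4 : S2)
    (hγ2m1 : γ (γ m1) = -m1) (hγ2m2 : γ (γ m2) = -m2)
    (hγ2m3 : γ (γ m3) = -m3) (hγ2m4 : γ (γ m4) = -m4)
    (hlog1 : m1 - γ m1 = ι r1)
    (hlog2 : m2 - γ m2 = γ m1 * ι r1 ^ 2 + ι r3)
    (hlog3 : m3 - γ m3 = γ m2 * ι r1 ^ 4 + γ m1 * ι r3 ^ 2)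
    (hlog4 : m4 - γ m4 = γ m3 * ι r1 ^ 8 + γ m2 * ι r3 ^ 4)
    (v1 v2 v3 v4 : S)
    (h2s1 : 2 * m1 = 4 * m1 + ι v1)
    (h2s2 : 2 * m2 = 16 * m2 + m1 * ι v1 ^ 2 + ι v2)
    (h2s3 : 2 * m3 = 2 ^ 8 * m3 + m2 * ι v1 ^ 4 + m1 * ι v2 ^ 2 + ι v3)
    (h2s4 : 2 * m4 = 2 ^ 16 * m4 + m3 * ι v1 ^ 8 + m2 * ι v2 ^ 4 + m1 * ι v3 ^ 2 + ι v4)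
    : v4 - r3 ^ 4 * s3 ∈ Ideal.span ({2, v1, v2, v3} : Set S) := by
  -- The `γ`-conjugates of the logarithm relations.
  have g1 := congrArg γ hlog1
  have g2 := congrArg γ hlog2
  have g3 := congrArg γ hlog3
  have g4 := congrArg γ hlog4
  simp only [map_sub, map_add, map_mul, map_pow, hγr1, hγr3, hγ2m1, hγ2m2, hγ2m3, hγ2m4]
    at g1 g2 g3 g4
  have two_cancel : ∀ {a b : S2}, 2 * a = 2 * b → a = b := fun h => isUnit_two.mul_left_cancel h
  have hv1 : v1 = -(r1 + s1) := by
    apply ι_injective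
    simp only [map_neg, map_add]
    linear_combination -h2s1 - hlog1 - g1
  have hm1 : 2 * m1 = ι r1 + ι s1 := by linear_combination hlog1 + g1
  have hv2 : v2 = -7 * (r3 + s3 - r1 ^ 3) + (r1 + s1) * (-4 * r1 ^ 2 - r1 * s1 + 3 * s1 ^ 2) := by
    apply ι_injective
    apply two_cancel
    simp only [hv1, map_neg, map_add, map_sub, map_mul, map_pow, map_ofNat] at h2s2 ⊢
    linear_combination (-2) * h2s2 - 14 * (hlog2 + g2) + 14 * ι r1 ^ 2 * hlog1
      + (-7 * ι r1 ^ 2 + 7 * ι s1 ^ 2 - (ι r1 + ι s1) ^ 2) * hm1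
  set I := Ideal.span ({2, v1, v2, v3} : Set S) with hI
  have i2 : (2 : S) ∈ I := Ideal.subset_span (by simp)
  have i1 : v1 ∈ I := Ideal.subset_span (by simp)
  have iv2 : v2 ∈ I := Ideal.subset_span (by simp)
  have i3 : v3 ∈ I := Ideal.subset_span (by simp)
  have hw1 : r1 + s1 ∈ I := by
    rw [hv1] at i1
    simpa using I.neg_mem i1
  have hw3 : r3 + s3 - r1 ^ 3 ∈ I := by
    have e : r3 + s3 - r1 ^ 3 = v2 - (-4 * r1 ^ 2 - r1 * s1 + 3 * s1 ^ 2) * (r1 + s1)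
        + (4 * (r3 + s3 - r1 ^ 3)) * 2 := by
      rw [hv2]; ring
    rw [e]
    exact I.add_mem (I.sub_mem iv2 (I.mul_mem_left _ hw1)) (I.mul_mem_left _ i2)
  have hsub := sub_spec_mem I hw1 hw3
  -- Specialize every relation.
  have sv1 : ι (spec v1) = 0 := by rw [hv1]; simp [spec_r1, spec_s1]
  have sv2 : ι (spec v2) = 0 := by
    rw [hv2]; simp [spec_r1, spec_s1, spec_r3, spec_s3]
  have a1 := congrArg specAway hlog1
  have a2 := congrArg specAway hlog2
  have a3 := congrArg specAway hlog3
  have a4 := congrArg specAway hlog4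
  have b2 := congrArg specAway g2
  have b3 := congrArg specAway g3
  have b4 := congrArg specAway g4
  have c1 := congrArg specAway hm1
  have c3 := congrArg specAway h2s3
  have c4 := congrArg specAway h2s4
  simp only [map_sub, map_add, map_mul, map_pow, map_neg, map_ofNat, specAway_ι, spec_r1, spec_s1,
    spec_r3, spec_s3, sv1, sv2] at a1 a2 a3 a4 b2 b3 b4 c1 c3 c4
  have n1 : specAway m1 = 0 := two_cancel (by linear_combination c1)
  have k1 : specAway (γ m1) = -ι r1 := by linear_combination n1 - a1
  rw [n1] at b2 b3 c3 c4
  rw [k1] at a2 a3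
  have n2 : specAway m2 = 0 := two_cancel (by linear_combination a2 + b2)
  have k2 : specAway (γ m2) = ι r1 ^ 3 - ι r3 := by linear_combination n2 - a2
  rw [n2] at b3 b4 c3 c4
  rw [k2] at a3 a4
  have sv3 : spec v3 = -127 * (r1 ^ 7 - r1 ^ 4 * r3 - r1 * r3 ^ 2) := by
    apply ι_injective
    simp only [map_neg, map_sub, map_mul, map_pow, map_ofNat]
    linear_combination (-1) * c3 - 127 * (a3 + b3)
  have sv4 : spec v4 = (1 - 2 ^ 15) *
      ((r1 ^ 3 - r3) * r3 ^ 4 - (r1 ^ 7 - r1 ^ 4 * r3 - r1 * r3 ^ 2) * r1 ^ 8) := by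
    apply ι_injective
    simp only [map_sub, map_mul, map_pow, map_ofNat, map_one]
    linear_combination (-1) * c4 + (1 - 2 ^ 15) * (a4 + b4 - ι r1 ^ 8 * a3)
  have hs3 : spec v3 ∈ I := by
    have := I.sub_mem i3 (hsub v3)
    rwa [sub_sub_cancel] at this
  have hs4 : spec (v4 - r3 ^ 4 * s3) ∈ I := by
    have e : spec (v4 - r3 ^ 4 * s3) = -r1 ^ 8 * spec v3
        + (-2 ^ 14 * (r1 ^ 3 - r3) * r3 ^ 4
          + (2 ^ 14 - 64) * (r1 ^ 7 - r1 ^ 4 * r3 - r1 * r3 ^ 2) * r1 ^ 8) * 2 := by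
      simp only [map_sub, map_mul, map_pow, spec_r3, spec_s3, sv3, sv4]
      ring
    rw [e]
    exact I.add_mem (I.mul_mem_left _ hs3) (I.mul_mem_left _ i2)
  have hsum := I.add_mem (hsub (v4 - r3 ^ 4 * s3)) hs4
  rwa [sub_add_cancel (v4 - r3 ^ 4 * s3)] at hsum
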